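/- Let z_1, …, z_N ∈ ℝ^d, let p ∈ M₁, let ε > 0, and for each i ∈ {1,…,N} let ℓ_i : ℝ^n → ℝ be any function. For q ∈ M₁ define W(p, q) as the infimum of Σ_{i,j} Π_{ij} ‖z_i − z_j‖ over matrices Π ∈ ℝ^{N×N} with Π_{ij} ≥ 0, Σ_j Π_{ij} = q_i for all i, and Σ_i Π_{ij} = p_j for all j, where ‖·‖ is the Euclidean norm on ℝ^d. Then inf_{θ ∈ ℝ^n} sup{ Σ_{i=1}^N q_i ℓ_i(θ) : q ∈ M₁, W(p, q) ≤ ε } = inf{ λ ε + Σ_{j=1}^N p_j s_j : θ ∈ ℝ^n, λ ≥ 0, s ∈ ℝ^N, and ℓ_i(θ) − λ ‖z_i − z_j‖ ≤ s_j for all i, j ∈ {1,…,N} }. -/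

import Mathlib

open scoped BigOperators

/-- Discrete Wasserstein distance between the distributions with weights `p` and `q`
supported on the points `z_1, …, z_N ∈ ℝ^d`, with Euclidean ground metric. -/
noncomputable def wassDist {N d : ℕ} (z : Fin N → EuclideanSpace ℝ (Fin d))
    (p q : Fin N → ℝ) : ℝ :=
  sInf {c : ℝ | ∃ Pi : Fin N → Fin N → ℝ,
    (∀ i j, 0 ≤ Pi i j) ∧ (∀ i, ∑ j, Pi i j = q i) ∧ (∀ j, ∑ i, Pi i j = p j) ∧
    c = ∑ i, ∑ j, Pi i j * ‖z i - z j‖}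


/-- Scalar Lagrange multiplier for a convex set of pairs (cost, gain). -/
lemma exists_multiplier (K : Set (ℝ × ℝ)) (hK : Convex ℝ K) (ε V : ℝ)
    (hV : ∀ w ∈ K, w.1 ≤ ε → w.2 ≤ V) (w0 : ℝ × ℝ) (h0 : w0 ∈ K) (h0ε : w0.1 < ε) :
    ∃ l : ℝ, 0 ≤ l ∧ ∀ w ∈ K, w.2 - V ≤ l * (w.1 - ε) := by
  obtain ⟨l, hl1, hl2⟩ := exists_between_of_forall_le
    (s := insert 0 {r | ∃ w ∈ K, ε < w.1 ∧ r = (w.2 - V) / (w.1 - ε)})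
    (t := {r | ∃ w ∈ K, w.1 < ε ∧ r = (V - w.2) / (ε - w.1)})
    ⟨0, Set.mem_insert _ _⟩ ⟨_, w0, h0, h0ε, rfl⟩ (by
      rintro r hr _ ⟨w, hw, hwε, rfl⟩
      rcases hr with rfl | ⟨u, hu, huε, rfl⟩
      · exact div_nonneg (by linarith [hV w hw hwε.le]) (by linarith)
      · rw [div_le_div_iff₀ (by linarith) (by linarith)]
        have hD : 0 < u.1 - w.1 := by linarith
        have hmem := hK hu hw (a := (ε - w.1) / (u.1 - w.1)) (b := (u.1 - ε) / (u.1 - w.1))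
          (div_nonneg (by linarith) hD.le) (div_nonneg (by linarith) hD.le)
          (by field_simp; ring)
        have h := hV _ hmem (by
          simp only [Prod.fst_add, Prod.smul_fst, smul_eq_mul]
          apply le_of_eq; field_simp; ring)
        simp only [Prod.snd_add, Prod.smul_snd, smul_eq_mul] at h
        have h' : ((ε - w.1) * u.2 + (u.1 - ε) * w.2) / (u.1 - w.1) ≤ V := by
          refine le_of_eq_of_le ?_ h
          ring
        rw [div_le_iff₀ hD] at h'
        nlinarith)
  refine ⟨l, hl1 (Set.mem_insert _ _), fun w hw => ?_⟩
  rcases lt_trichotomy w.1 ε with h | h | h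
  · have := hl2 ⟨w, hw, h, rfl⟩
    rw [le_div_iff₀ (by linarith)] at this
    linarith
  · have := hV w hw h.le
    rw [h]; linarith
  · have := hl1 (Set.mem_insert_of_mem _ ⟨w, hw, h, rfl⟩)
    rwa [div_le_iff₀ (by linarith)] at this

lemma wassDist_le {N d : ℕ} (z : Fin N → EuclideanSpace ℝ (Fin d))
    (p q : Fin N → ℝ) (P : Fin N → Fin N → ℝ) (h0 : ∀ i j, 0 ≤ P i j)
    (hq : ∀ i, ∑ j, P i j = q i) (hp : ∀ j, ∑ i, P i j = p j) :
    wassDist z p q ≤ ∑ i, ∑ j, P i j * ‖z i - z j‖ := by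
  apply csInf_le
  · refine ⟨0, ?_⟩
    rintro _ ⟨R, hR, -, -, rfl⟩
    exact Finset.sum_nonneg fun i _ => Finset.sum_nonneg fun j _ =>
      mul_nonneg (hR i j) (norm_nonneg _)
  · exact ⟨P, h0, hq, hp, rfl⟩

lemma weak_dual {N d : ℕ} (z : Fin N → EuclideanSpace ℝ (Fin d))
    (p q : Fin N → ℝ) (hp : p ∈ stdSimplex ℝ (Fin N)) (hq : q ∈ stdSimplex ℝ (Fin N))
    (ε : ℝ) (hW : wassDist z p q ≤ ε) (a : Fin N → ℝ) (l : ℝ) (hl : 0 ≤ l) (s : Fin N → ℝ)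
    (hs : ∀ i j, a i - l * ‖z i - z j‖ ≤ s j) :
    ∑ i, q i * a i ≤ l * ε + ∑ j, p j * s j := by
  have key : ∀ δ > 0, ∑ i, q i * a i ≤ l * (ε + δ) + ∑ j, p j * s j := by
    intro δ hδ
    have hlt : wassDist z p q < ε + δ := by linarith
    obtain ⟨_, ⟨P, hP, hPq, hPp, rfl⟩, hc⟩ := exists_lt_of_csInf_lt (by
      refine ⟨_, fun i j => q i * p j, fun i j => mul_nonneg (hq.1 i) (hp.1 j), ?_, ?_, rfl⟩
      · intro i; rw [← Finset.mul_sum, hp.2, mul_one]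
      · intro j; rw [← Finset.sum_mul, hq.2, one_mul]) hlt
    calc ∑ i, q i * a i = ∑ i, ∑ j, P i j * a i := by
          refine Finset.sum_congr rfl fun i _ => ?_
          rw [← hPq i, Finset.sum_mul]
      _ ≤ ∑ i, ∑ j, (l * (P i j * ‖z i - z j‖) + P i j * s j) := by
          refine Finset.sum_le_sum fun i _ => Finset.sum_le_sum fun j _ => ?_
          nlinarith [hs i j, hP i j, mul_le_mul_of_nonneg_left (hs i j) (hP i j)]
      _ = l * (∑ i, ∑ j, P i j * ‖z i - z j‖) + ∑ j, p j * s j := by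
          simp only [Finset.sum_add_distrib, ← Finset.mul_sum]
          congr 1
          rw [Finset.sum_comm]
          refine Finset.sum_congr rfl fun j _ => ?_
          rw [← hPp j, Finset.sum_mul]
      _ ≤ _ := by
          have := mul_le_mul_of_nonneg_left hc.le hl
          linarith
  refine le_of_forall_pos_le_add fun η hη => ?_
  have h := key (η / (l + 1)) (by positivity)
  have : l * (η / (l + 1)) ≤ η := by
    rw [mul_div_assoc', div_le_iff₀ (by positivity)]
    nlinarith
  nlinarith

lemma strong_dual {N d : ℕ} (hN : 1 ≤ N) (z : Fin N → EuclideanSpace ℝ (Fin d))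
    (p : Fin N → ℝ) (hp : p ∈ stdSimplex ℝ (Fin N))
    (ε : ℝ) (hε : 0 < ε) (a : Fin N → ℝ) (V : ℝ)
    (hV : ∀ q ∈ stdSimplex ℝ (Fin N), wassDist z p q ≤ ε → ∑ i, q i * a i ≤ V) :
    ∃ l : ℝ, 0 ≤ l ∧ ∃ s : Fin N → ℝ, (∀ i j, a i - l * ‖z i - z j‖ ≤ s j) ∧
      l * ε + ∑ j, p j * s j ≤ V := by
  haveI : Nonempty (Fin N) := ⟨⟨0, hN⟩⟩
  -- transport plans induced by a map
  have hmap : ∀ σ : Fin N → Fin N, ∀ f : Fin N → Fin N → ℝ,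
      ∑ i, ∑ j, (if i = σ j then p j else 0) * f i j = ∑ j, p j * f (σ j) j := by
    intro σ f
    rw [Finset.sum_comm]
    refine Finset.sum_congr rfl fun j _ => ?_
    simp [ite_mul]
  have hmap0 : ∀ σ : Fin N → Fin N, ∀ i j, 0 ≤ (if i = σ j then p j else 0) := by
    intro σ i j
    split_ifs
    exacts [hp.1 j, le_rfl]
  have hmap1 : ∀ σ : Fin N → Fin N, ∀ j, ∑ i, (if i = σ j then p j else 0) = p j := by
    intro σ j; simp
  obtain ⟨l, hl, h⟩ := exists_multiplier
    {w | ∃ P : Fin N → Fin N → ℝ, (∀ i j, 0 ≤ P i j) ∧ (∀ j, ∑ i, P i j = p j) ∧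
      w = (∑ i, ∑ j, P i j * ‖z i - z j‖, ∑ i, ∑ j, P i j * a i)} (by
      rintro _ ⟨P, hP, hPp, rfl⟩ _ ⟨R, hR, hRp, rfl⟩ α β hα hβ hαβ
      refine ⟨fun i j => α * P i j + β * R i j, fun i j => ?_, fun j => ?_, ?_⟩
      · exact add_nonneg (mul_nonneg hα (hP i j)) (mul_nonneg hβ (hR i j))
      · rw [Finset.sum_add_distrib, ← Finset.mul_sum, ← Finset.mul_sum, hPp, hRp, ← add_mul, hαβ,
          one_mul]
      · simp only [Prod.smul_mk, Prod.mk_add_mk, smul_eq_mul, add_mul, Finset.sum_add_distrib,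
          mul_assoc, ← Finset.mul_sum]) ε V (by
      rintro _ ⟨P, hP, hPp, rfl⟩ hc
      have := hV (fun i => ∑ j, P i j) ⟨fun i => Finset.sum_nonneg fun j _ => hP i j, by
        rw [Finset.sum_comm]; simp only [hPp]; exact hp.2⟩
        ((wassDist_le z p _ P hP (fun _ => rfl) hPp).trans hc)
      simpa only [Finset.sum_mul] using this)
    _ ⟨fun i j => if i = id j then p j else 0, hmap0 id, hmap1 id, rfl⟩ (by
      simp only [hmap id (fun i j => ‖z i - z j‖)]
      simpa using hε)
  have hmax : ∀ j, ∃ k, ∀ i, a i - l * ‖z i - z j‖ ≤ a k - l * ‖z k - z j‖ :=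
    fun j => Finite.exists_max _
  choose σ hσ using hmax
  refine ⟨l, hl, fun j => a (σ j) - l * ‖z (σ j) - z j‖, fun i j => hσ j i, ?_⟩
  have := h _ ⟨fun i j => if i = σ j then p j else 0, hmap0 σ, hmap1 σ, rfl⟩
  simp only [hmap σ (fun i j => ‖z i - z j‖), hmap σ (fun i j => a i)] at this
  have e : ∑ j, p j * (a (σ j) - l * ‖z (σ j) - z j‖)
      = ∑ j, p j * a (σ j) - l * ∑ j, p j * ‖z (σ j) - z j‖ := by
    rw [Finset.mul_sum, ← Finset.sum_sub_distrib]
    exact Finset.sum_congr rfl fun j _ => by ring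
  rw [e]
  linarith

/-- for points `z_1, …, z_N ∈ ℝ^d`, `p ∈ M₁`, `ε > 0` and arbitrary loss
functions `ℓ_i : ℝ^n → ℝ`:
`inf_θ sup {Σ_i q_i ℓ_i(θ) : q ∈ M₁, W(p,q) ≤ ε}` equals
`inf {λε + Σ_j p_j s_j : θ ∈ ℝ^n, λ ≥ 0, s ∈ ℝ^N, ℓ_i(θ) − λ‖z_i − z_j‖ ≤ s_j ∀ i,j}`,
both infima taken in `ℝ ∪ {±∞}` (i.e. `EReal`). -/
theorem stmt_18 {N n d : ℕ} (hN : 1 ≤ N) (hn : 1 ≤ n) (hd : 1 ≤ d)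
    (z : Fin N → EuclideanSpace ℝ (Fin d))
    (p : Fin N → ℝ) (hp : p ∈ stdSimplex ℝ (Fin N))
    (ε : ℝ) (hε : 0 < ε)
    (ℓ : Fin N → (Fin n → ℝ) → ℝ) :
    (⨅ θ : Fin n → ℝ,
        ⨆ q ∈ {q ∈ stdSimplex ℝ (Fin N) | wassDist z p q ≤ ε},
          (((∑ i, q i * ℓ i θ : ℝ)) : EReal))
      = ⨅ θ : Fin n → ℝ, ⨅ l ∈ Set.Ici (0 : ℝ),
          ⨅ s ∈ {s : Fin N → ℝ | ∀ i j, ℓ i θ - l * ‖z i - z j‖ ≤ s j},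
            (((l * ε + ∑ j, p j * s j : ℝ)) : EReal) := by
  refine iInf_congr fun θ => le_antisymm ?_ ?_
  · refine le_iInf₂ fun l hl => le_iInf₂ fun s hs => iSup₂_le fun q hq => ?_
    exact EReal.coe_le_coe_iff.2
      (weak_dual z p q hp hq.1 ε hq.2 (fun i => ℓ i θ) l hl s hs)
  · refine EReal.le_of_forall_lt_iff_le.1 fun V hV => ?_
    obtain ⟨l, hl, s, hs, hle⟩ := strong_dual hN z p hp ε hε (fun i => ℓ i θ) V (by
      intro q hq hW
      exact EReal.coe_le_coe_iff.1 ((le_iSup₂ (f := fun (q : Fin N → ℝ)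
        (_ : q ∈ {q ∈ stdSimplex ℝ (Fin N) | wassDist z p q ≤ ε}) =>
        ((∑ i, q i * ℓ i θ : ℝ) : EReal)) q ⟨hq, hW⟩).trans hV.le))
    exact (iInf₂_le_of_le l hl (iInf₂_le_of_le s hs le_rfl)).trans (EReal.coe_le_coe_iff.2 hle)
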